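/- arXiv:math/0511458 — 2 statements merged into one kernel-verified Lean document; each statement's English description precedes it below -/
import Mathlib

section
/- The stabilizer of φ, namely the set G₂ = {g ∈ GL(7, ℝ) : φ(g x, g y, g z) = φ(x, y, z) for all x, y, z ∈ ℝ⁷}, is a compact subgroup of GL(7, ℝ). -/
noncomputable section

open Matrix

/-- `3 × 3` determinant of coordinates `a, b, c` of `(x, y, z)`. -/
def det3 (a b c : Fin 7) (x y z : Fin 7 → ℝ) : ℝ :=
  x a * (y b * z c - y c * z b) - x b * (y a * z c - y c * z a) +
    x c * (y a * z b - y b * z a)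

/-- The associative calibration `φ` of Harvey–Lawson on `ℝ⁷`. -/
def phi (x y z : Fin 7 → ℝ) : ℝ :=
  det3 4 5 6 x y z - det3 4 0 1 x y z - det3 4 2 3 x y z -
    det3 5 0 2 x y z - det3 5 3 1 x y z - det3 6 0 3 x y z - det3 6 1 2 x y z

/-- The stabilizer of `φ` inside `GL(7, ℝ)`. -/
def G2set : Set (GL (Fin 7) ℝ) :=
  {g | ∀ x y z : Fin 7 → ℝ,
    phi ((g : Matrix (Fin 7) (Fin 7) ℝ) *ᵥ x) ((g : Matrix (Fin 7) (Fin 7) ℝ) *ᵥ y)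
      ((g : Matrix (Fin 7) (Fin 7) ℝ) *ᵥ z) = phi x y z}

/-- The skew matrix of the 2-form `φ(u, ·, ·)`. -/
def Am (u : Fin 7 → ℝ) : Matrix (Fin 7) (Fin 7) ℝ :=
  !![0, -u 4, -u 5, -u 6, u 1, u 2, u 3;
     u 4, 0, -u 6, u 5, -u 0, -u 3, u 2;
     u 5, u 6, 0, -u 4, u 3, -u 0, -u 1;
     u 6, -u 5, u 4, 0, -u 2, u 1, -u 0;
     -u 1, u 0, -u 3, u 2, 0, u 6, -u 5;
     -u 2, u 3, u 0, -u 1, -u 6, 0, u 4;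
     -u 3, -u 2, u 1, u 0, u 5, -u 4, 0]

lemma phi_eq_Am (u y z : Fin 7 → ℝ) : phi u y z = y ⬝ᵥ (Am u *ᵥ z) := by
  simp [phi, det3, Am, dotProduct, mulVec, Fin.sum_univ_succ]
  ring

lemma Am_mulVec_self (u : Fin 7 → ℝ) : Am u *ᵥ u = 0 := by
  ext i
  fin_cases i <;> simp [Am, mulVec, dotProduct, Fin.sum_univ_succ] <;> ring

lemma Am_vecMul_self (u : Fin 7 → ℝ) : u ᵥ* Am u = 0 := by
  ext i
  fin_cases i <;> simp [Am, vecMul, dotProduct, Fin.sum_univ_succ] <;> ring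

lemma Am_sq (u : Fin 7 → ℝ) :
    Am u * Am u = (-(u ⬝ᵥ u)) • (1 : Matrix (Fin 7) (Fin 7) ℝ) + vecMulVec u u := by
  ext i j
  fin_cases i <;> fin_cases j <;>
    simp [Am, Matrix.mul_apply, dotProduct, Fin.sum_univ_succ, vecMulVec_apply] <;> ring

lemma det_one_add_vmv (u v : Fin 7 → ℝ) :
    (1 + vecMulVec u v).det = 1 + v ⬝ᵥ u := by
  rw [vecMulVec_eq Unit, det_one_add_replicateCol_mul_replicateRow]

lemma det_self_sq (u : Fin 7 → ℝ) (hu : u ⬝ᵥ u ≠ 0) :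
    (Am u + vecMulVec u u).det ^ 2 = (u ⬝ᵥ u) ^ 8 := by
  set r := u ⬝ᵥ u with hr
  have h : (Am u + vecMulVec u u) * (Am u + vecMulVec u u) =
      (-r) • (1 + vecMulVec ((-(1 + r) / r) • u) u) := by
    rw [add_mul, mul_add, mul_add, Am_sq, mul_vecMulVec, vecMulVec_mul, Am_mulVec_self,
      Am_vecMul_self, vecMulVec_mul_vecMulVec, ← hr]
    ext i j
    simp only [Matrix.add_apply, Matrix.smul_apply, vecMulVec_apply, Pi.smul_apply, smul_eq_mul,
      Pi.zero_apply]
    field_simp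
    ring
  rw [sq, ← det_mul, h, det_smul, det_one_add_vmv, dotProduct_smul, ← hr]
  simp only [Fintype.card_fin, smul_eq_mul]
  field_simp
  ring

lemma det_gen_sq (u x : Fin 7 → ℝ) (hu : u ⬝ᵥ u ≠ 0) :
    (Am u + vecMulVec x x).det ^ 2 = (u ⬝ᵥ u) ^ 4 * (x ⬝ᵥ u) ^ 4 := by
  set r := u ⬝ᵥ u with hr
  set y : Fin 7 → ℝ := r⁻¹ • (x - u) with hy
  have h : (1 + vecMulVec y u) * (Am u + vecMulVec u u) * (1 + vecMulVec u y)
      = Am u + vecMulVec x x := by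
    have e1 : (1 + vecMulVec y u) * (Am u + vecMulVec u u) = Am u + vecMulVec x u := by
      rw [add_mul, one_mul, mul_add, vecMulVec_mul, Am_vecMul_self, vecMulVec_mul_vecMulVec, ← hr]
      ext i j
      simp [vecMulVec_apply, hy]
      field_simp
      ring
    rw [e1, mul_add, mul_one, add_mul, mul_vecMulVec, Am_mulVec_self, vecMulVec_mul_vecMulVec, ← hr]
    ext i j
    simp [vecMulVec_apply, hy]
    field_simp
    ring
  have hd : y ⬝ᵥ u = (x ⬝ᵥ u - r) / r := by
    rw [hy, smul_dotProduct, sub_dotProduct, ← hr, smul_eq_mul]; field_simp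
  rw [← h, det_mul, det_mul, det_one_add_vmv, det_one_add_vmv, dotProduct_comm u y, hd,
    mul_pow, mul_pow, det_self_sq u hu, ← hr]
  field_simp
  ring

lemma Am_congr (g : Matrix (Fin 7) (Fin 7) ℝ)
    (hg : ∀ x y z : Fin 7 → ℝ, phi (g *ᵥ x) (g *ᵥ y) (g *ᵥ z) = phi x y z) (u : Fin 7 → ℝ) :
    gᵀ * Am (g *ᵥ u) * g = Am u := by
  ext i j
  have h := hg u (Pi.single i 1) (Pi.single j 1)
  rw [phi_eq_Am, phi_eq_Am, ← vecMul_transpose, ← dotProduct_mulVec, mulVec_mulVec,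
    mulVec_mulVec] at h
  simpa [mul_assoc] using h

lemma dot_pos (u : Fin 7 → ℝ) (hu : u ≠ 0) : 0 < u ⬝ᵥ u := by
  have h1 : 0 ≤ u ⬝ᵥ u := Finset.sum_nonneg fun i _ => mul_self_nonneg _
  exact lt_of_le_of_ne h1 fun h => hu (dotProduct_self_eq_zero.1 h.symm)

lemma norm_scale (g : Matrix (Fin 7) (Fin 7) ℝ) (hdet : g.det ≠ 0)
    (hg : ∀ x y z : Fin 7 → ℝ, phi (g *ᵥ x) (g *ᵥ y) (g *ᵥ z) = phi x y z) (u : Fin 7 → ℝ) :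
    |g.det| * ((g *ᵥ u) ⬝ᵥ (g *ᵥ u)) = u ⬝ᵥ u := by
  by_cases hu : u = 0
  · simp [hu]
  have hgu : g *ᵥ u ≠ 0 := fun h => hu (eq_zero_of_mulVec_eq_zero hdet h)
  have hr := dot_pos u hu
  have hq := dot_pos _ hgu
  have hd : 0 < |g.det| := abs_pos.2 hdet
  have key : gᵀ * (Am (g *ᵥ u) + vecMulVec (g *ᵥ u) (g *ᵥ u)) * g
      = Am u + vecMulVec ((g *ᵥ u) ᵥ* g) ((g *ᵥ u) ᵥ* g) := by
    rw [mul_add, add_mul, Am_congr g hg, mul_vecMulVec, vecMulVec_mul, mulVec_transpose]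
  have h2 := congrArg (fun M => (det M) ^ 2) key
  simp only [det_mul, det_transpose] at h2
  rw [det_gen_sq u _ hr.ne', ← dotProduct_mulVec, mul_pow, mul_pow, det_self_sq _ hq.ne'] at h2
  set q := (g *ᵥ u) ⬝ᵥ (g *ᵥ u)
  set r := u ⬝ᵥ u
  have h3 : (|g.det| * q) ^ 4 = r ^ 4 := by
    have : (|g.det|) ^ 4 = g.det ^ 4 := by
      rw [← abs_pow]; exact abs_of_nonneg (by positivity)
    rw [mul_pow, this]
    have hq4 : q ^ 4 ≠ 0 := by positivity
    apply mul_right_cancel₀ hq4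
    linarith
  exact (pow_left_inj₀ (by positivity) hr.le (by norm_num)).1 h3

lemma orth (g : Matrix (Fin 7) (Fin 7) ℝ) (hdet : g.det ≠ 0)
    (hg : ∀ x y z : Fin 7 → ℝ, phi (g *ᵥ x) (g *ᵥ y) (g *ᵥ z) = phi x y z) :
    gᵀ * g = 1 := by
  have hd : 0 < |g.det| := abs_pos.2 hdet
  have hs : |g.det| • (gᵀ * g) = 1 := by
    ext i j
    have pol : ∀ u v : Fin 7 → ℝ, |g.det| * ((g *ᵥ u) ⬝ᵥ (g *ᵥ v)) = u ⬝ᵥ v := by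
      intro u v
      have h1 := norm_scale g hdet hg (u + v)
      have h2 := norm_scale g hdet hg u
      have h3 := norm_scale g hdet hg v
      simp only [mulVec_add, add_dotProduct, dotProduct_add] at h1
      rw [dotProduct_comm v u, dotProduct_comm (g *ᵥ v) (g *ᵥ u)] at h1
      linarith
    have h := pol (Pi.single i 1) (Pi.single j 1)
    rw [← vecMul_transpose, ← dotProduct_mulVec, mulVec_mulVec] at h
    simpa [Matrix.one_apply, Pi.single_apply, eq_comm] using h
  have hdd := congrArg det hs
  rw [det_smul, det_mul, det_transpose, det_one, Fintype.card_fin, ← abs_mul_abs_self g.det] at hdd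
  have h9 : |g.det| ^ 9 = 1 := by rw [← hdd]; ring
  have h1 : |g.det| = 1 := (pow_eq_one_iff_of_nonneg hd.le (by norm_num)).1 h9
  rwa [h1, one_smul] at hs

/-- The matrices which are orthogonal and preserve `φ`. -/
def Kset : Set (Matrix (Fin 7) (Fin 7) ℝ) :=
  {m | m * mᵀ = 1 ∧ mᵀ * m = 1 ∧
    ∀ x y z : Fin 7 → ℝ, phi (m *ᵥ x) (m *ᵥ y) (m *ᵥ z) = phi x y z}

lemma Kset_compact : IsCompact Kset := by
  have hcl : IsClosed Kset := by
    have e : Kset = {m | m * mᵀ = 1} ∩ ({m | mᵀ * m = 1} ∩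
      ⋂ x : Fin 7 → ℝ, ⋂ y : Fin 7 → ℝ, ⋂ z : Fin 7 → ℝ,
        {m | phi (m *ᵥ x) (m *ᵥ y) (m *ᵥ z) = phi x y z}) := by
      ext m; simp [Kset]
    rw [e]
    refine (isClosed_eq (by fun_prop) (by fun_prop)).inter
      ((isClosed_eq (by fun_prop) (by fun_prop)).inter ?_)
    refine isClosed_iInter fun x => isClosed_iInter fun y => isClosed_iInter fun z =>
      isClosed_eq ?_ continuous_const
    unfold phi det3
    fun_prop
  have hb : IsCompact (Set.univ.pi fun _ : Fin 7 => Set.univ.pi fun _ : Fin 7 =>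
      Set.Icc (-1 : ℝ) 1) :=
    isCompact_univ_pi fun _ => isCompact_univ_pi fun _ => isCompact_Icc
  have bound : ∀ m : Matrix (Fin 7) (Fin 7) ℝ, m * mᵀ = 1 → ∀ i j, -1 ≤ m i j ∧ m i j ≤ 1 := by
    intro m hm i j
    have h := congrFun (congrFun hm i) i
    rw [Matrix.mul_apply, one_apply_eq] at h
    have h2 : m i j * mᵀ j i ≤ 1 := by
      rw [← h]
      exact Finset.single_le_sum (f := fun k => m i k * mᵀ k i)
        (fun k _ => mul_self_nonneg (m i k)) (Finset.mem_univ j)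
    rw [transpose_apply] at h2
    exact abs_le.1 (abs_le_one_iff_mul_self_le_one.2 h2)
  exact hb.of_isClosed_subset hcl fun m hm i _ j _ => bound m hm.1 i j

/-- The stabilizer as a subgroup. -/
def G2sub : Subgroup (GL (Fin 7) ℝ) where
  carrier := G2set
  one_mem' := by intro x y z; simp
  mul_mem' := by
    intro a b ha hb x y z
    have := ha ((b : Matrix (Fin 7) (Fin 7) ℝ) *ᵥ x) ((b : Matrix (Fin 7) (Fin 7) ℝ) *ᵥ y)
      ((b : Matrix (Fin 7) (Fin 7) ℝ) *ᵥ z)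
    rw [hb x y z] at this
    simpa [mulVec_mulVec] using this
  inv_mem' := by
    intro a ha x y z
    have := ha (((a⁻¹ : GL (Fin 7) ℝ) : Matrix (Fin 7) (Fin 7) ℝ) *ᵥ x)
      (((a⁻¹ : GL (Fin 7) ℝ) : Matrix (Fin 7) (Fin 7) ℝ) *ᵥ y)
      (((a⁻¹ : GL (Fin 7) ℝ) : Matrix (Fin 7) (Fin 7) ℝ) *ᵥ z)
    simp only [mulVec_mulVec, Units.mul_inv, one_mulVec] at this
    exact this.symm

/-- The stabilizer `G₂ = {g ∈ GL(7, ℝ) : g⋅φ = φ}` is a compact subgroup of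
`GL(7, ℝ)`. -/
theorem G2_compact_subgroup :
    (∃ H : Subgroup (GL (Fin 7) ℝ), (H : Set (GL (Fin 7) ℝ)) = G2set) ∧
      IsCompact G2set := by
  refine ⟨⟨G2sub, rfl⟩, ?_⟩
  let f : Kset → GL (Fin 7) ℝ := fun m => ⟨m.1, m.1ᵀ, m.2.1, m.2.2.1⟩
  have hf : Continuous f := by
    refine Units.continuous_iff.2 ⟨continuous_subtype_val, ?_⟩
    exact Continuous.matrix_transpose continuous_subtype_val
  have : CompactSpace Kset := isCompact_iff_compactSpace.1 Kset_compact
  have hr : G2set = Set.range f := by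
    ext g
    constructor
    · intro hg
      have ho := orth g.1 ((Matrix.isUnit_iff_isUnit_det _).1 g.isUnit).ne_zero hg
      exact ⟨⟨g.1, mul_eq_one_comm.1 ho, ho, hg⟩, Units.ext rfl⟩
    · rintro ⟨m, rfl⟩
      exact m.2.2.2
  rw [hr]
  exact isCompact_range hf
end
end

section
/- The set {X ∈ 𝔤₂ : X maps T into T}, where T = span(e₁, e₂, e₃, e₄), is a Lie subalgebra of 𝔤₂ of dimension 6. (This is the copy of 𝔰𝔬(4) inside 𝔤₂ that is the infinitesimal stabilizer of the coassociative plane T.) -/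
noncomputable section

open Matrix

/-- `𝔤₂`: the skew-symmetric `7 × 7` real matrices infinitesimally
stabilizing `φ`. -/
def g2 : Set (Matrix (Fin 7) (Fin 7) ℝ) :=
  {X | Xᵀ = -X ∧ ∀ u v w : Fin 7 → ℝ,
    phi (X *ᵥ u) v w + phi u (X *ᵥ v) w + phi u v (X *ᵥ w) = 0}

/-- The coassociative 4-plane `T = span(e₁, e₂, e₃, e₄)`:
the vectors `(x₁,x₂,x₃,x₄,0,0,0)`. -/
def Tplane : Set (Fin 7 → ℝ) := {x | x 4 = 0 ∧ x 5 = 0 ∧ x 6 = 0}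

/-- The explicit parametrization of the stabilizer by six reals. -/
def stabMat (p : Fin 6 → ℝ) : Matrix (Fin 7) (Fin 7) ℝ :=
  !![0, -p 0, -p 1, -p 2, 0, 0, 0;
     p 0, 0, -p 3, -p 4, 0, 0, 0;
     p 1, p 3, 0, -p 5, 0, 0, 0;
     p 2, p 4, p 5, 0, 0, 0, 0;
     0, 0, 0, 0, 0, -(p 2 + p 3), -(p 4 - p 1);
     0, 0, 0, 0, p 2 + p 3, 0, -(p 0 + p 5);
     0, 0, 0, 0, p 4 - p 1, p 0 + p 5, 0]

/-- `stabMat` as a linear map. -/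
def stabLin : (Fin 6 → ℝ) →ₗ[ℝ] Matrix (Fin 7) (Fin 7) ℝ where
  toFun := stabMat
  map_add' p q := by
    ext i j
    fin_cases i <;> fin_cases j <;> simp [stabMat] <;> ring
  map_smul' c p := by
    ext i j
    fin_cases i <;> fin_cases j <;> simp [stabMat] <;> ring

lemma stabLin_inj : Function.Injective stabLin := by
  intro p q h
  have e : ∀ i j, stabMat p i j = stabMat q i j := fun i j => congrFun (congrFun h i) j
  have h0 := e 1 0
  have h1 := e 2 0
  have h2 := e 3 0
  have h3 := e 2 1
  have h4 := e 3 1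
  have h5 := e 3 2
  simp [stabMat] at h0 h1 h2 h3 h4 h5
  ext i
  fin_cases i <;> simp [*]

lemma stabMat_mem (p : Fin 6 → ℝ) :
    stabMat p ∈ {X ∈ g2 | ∀ x ∈ Tplane, X *ᵥ x ∈ Tplane} := by
  refine ⟨⟨?_, ?_⟩, ?_⟩
  · ext i j
    fin_cases i <;> fin_cases j <;> simp [stabMat]
  · intro u v w
    simp only [phi, det3]
    simp [stabMat, Matrix.mulVec, dotProduct, Fin.sum_univ_succ]
    ring
  · rintro x ⟨h4, h5, h6⟩
    simp [Tplane, stabMat, Matrix.mulVec, dotProduct, Fin.sum_univ_seven, h4, h5, h6]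

lemma mem_stab (X : Matrix (Fin 7) (Fin 7) ℝ)
    (hX : X ∈ {X ∈ g2 | ∀ x ∈ Tplane, X *ᵥ x ∈ Tplane}) :
    X = stabMat ![X 1 0, X 2 0, X 3 0, X 2 1, X 3 1, X 3 2] := by
  obtain ⟨⟨hs, hp⟩, hT⟩ := hX
  have sk : ∀ i j, X j i = - X i j := fun i j => congrFun (congrFun hs i) j
  have dg : ∀ i, X i i = 0 := fun i => by linarith [sk i i]
  have z : ∀ i j, X i j = 0 → X j i = 0 := fun i j h => by rw [sk i j, h, neg_zero]
  have t0 := hT (Pi.single 0 1) (by simp [Tplane])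
  have t1 := hT (Pi.single 1 1) (by simp [Tplane])
  have t2 := hT (Pi.single 2 1) (by simp [Tplane])
  have t3 := hT (Pi.single 3 1) (by simp [Tplane])
  simp [Tplane] at t0 t1 t2 t3
  have a := hp (Pi.single 4 1) (Pi.single 0 1) (Pi.single 2 1)
  have b := hp (Pi.single 4 1) (Pi.single 0 1) (Pi.single 3 1)
  have c := hp (Pi.single 5 1) (Pi.single 0 1) (Pi.single 3 1)
  simp [phi, det3] at a b c
  obtain ⟨a1, a2, a3⟩ := t0
  obtain ⟨b1, b2, b3⟩ := t1
  obtain ⟨c1, c2, c3⟩ := t2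
  obtain ⟨d1, d2, d3⟩ := t3
  have s10 := sk 1 0
  have s20 := sk 2 0
  have s30 := sk 3 0
  have s21 := sk 2 1
  have s31 := sk 3 1
  have s32 := sk 3 2
  have s54 := sk 5 4
  have s64 := sk 6 4
  have s65 := sk 6 5
  ext i j
  fin_cases i <;> fin_cases j <;> simp [stabMat, dg] <;>
    first
    | assumption
    | linarith
    | (apply z; assumption)

lemma stab_eq (X : Matrix (Fin 7) (Fin 7) ℝ) :
    X ∈ LinearMap.range stabLin ↔ X ∈ {X ∈ g2 | ∀ x ∈ Tplane, X *ᵥ x ∈ Tplane} := by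
  constructor
  · rintro ⟨p, rfl⟩
    exact stabMat_mem p
  · intro h
    exact ⟨_, (mem_stab X h).symm⟩

lemma phi_sub₁ (x x' y z : Fin 7 → ℝ) : phi (x - x') y z = phi x y z - phi x' y z := by
  simp only [phi, det3, Pi.sub_apply]; ring

lemma phi_sub₂ (x y y' z : Fin 7 → ℝ) : phi x (y - y') z = phi x y z - phi x y' z := by
  simp only [phi, det3, Pi.sub_apply]; ring

lemma phi_sub₃ (x y z z' : Fin 7 → ℝ) : phi x y (z - z') = phi x y z - phi x y z' := by
  simp only [phi, det3, Pi.sub_apply]; ring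

lemma stab_lie (X Y : Matrix (Fin 7) (Fin 7) ℝ)
    (hX : X ∈ {X ∈ g2 | ∀ x ∈ Tplane, X *ᵥ x ∈ Tplane})
    (hY : Y ∈ {X ∈ g2 | ∀ x ∈ Tplane, X *ᵥ x ∈ Tplane}) :
    X * Y - Y * X ∈ {X ∈ g2 | ∀ x ∈ Tplane, X *ᵥ x ∈ Tplane} := by
  obtain ⟨⟨sX, pX⟩, tX⟩ := hX
  obtain ⟨⟨sY, pY⟩, tY⟩ := hY
  refine ⟨⟨?_, ?_⟩, ?_⟩
  · rw [Matrix.transpose_sub, Matrix.transpose_mul, Matrix.transpose_mul, sX, sY]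
    simp
  · intro u v w
    simp only [Matrix.sub_mulVec, ← Matrix.mulVec_mulVec, phi_sub₁, phi_sub₂, phi_sub₃]
    linarith [pX (Y *ᵥ u) v w, pX u (Y *ᵥ v) w, pX u v (Y *ᵥ w),
      pY (X *ᵥ u) v w, pY u (X *ᵥ v) w, pY u v (X *ᵥ w)]
  · intro x hx
    obtain ⟨h1, h2, h3⟩ := tX _ (tY x hx)
    obtain ⟨k1, k2, k3⟩ := tY _ (tX x hx)
    simp only [Matrix.sub_mulVec, ← Matrix.mulVec_mulVec]
    simp [Tplane, h1, h2, h3, k1, k2, k3, -Matrix.mulVec_mulVec]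

/-- The elements of `𝔤₂` mapping `T = span(e₁,…,e₄)` into itself form a Lie
subalgebra of `𝔤₂` of dimension `6` (a copy of `𝔰𝔬(4)`, the infinitesimal
stabilizer of the coassociative plane `T`). -/
theorem g2_stab_T_dim_6 :
    ∃ S : Submodule ℝ (Matrix (Fin 7) (Fin 7) ℝ),
      (S : Set (Matrix (Fin 7) (Fin 7) ℝ)) =
        {X ∈ g2 | ∀ x ∈ Tplane, X *ᵥ x ∈ Tplane} ∧
      (∀ X ∈ S, ∀ Y ∈ S, X * Y - Y * X ∈ S) ∧
      Module.finrank ℝ S = 6 := by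
  refine ⟨LinearMap.range stabLin, ?_, ?_, ?_⟩
  · ext X
    exact stab_eq X
  · intro X hX Y hY
    rw [stab_eq] at *
    exact stab_lie X Y hX hY
  · rw [LinearMap.finrank_range_of_inj stabLin_inj]
    simp
end
end
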